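/- arXiv:1612.09451 — 2 statements merged into one kernel-verified Lean document; each statement's English description precedes it below -/
import Mathlib

section
/- Let R be a regular local ring of Krull dimension 2, let M be a finitely generated torsion-free R-module of rank 2, and let A ⊆ M be a submodule of rank 1 such that B := M/A is torsion-free. Regard A as a submodule of M^{∨∨} via the evaluation map ε_M and set N := (M^{∨∨}/A)/Tors(M^{∨∨}/A). Then the R-modules A^{∨∨}/A, M^{∨∨}/M, B^{∨∨}/B and N^{∨∨}/N all have finite length, and length(A^{∨∨}/A) + length(B^{∨∨}/B) = length(M^{∨∨}/M) + length(N^{∨∨}/N). -/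
/-!
Statement 3 (local length identity behind Corollary 3.2(1) of the paper): over a regular local
ring of Krull dimension 2, for a rank 2 finitely generated torsion-free module `M` and a rank 1
submodule `A ⊆ M` with torsion-free quotient `B = M ⧸ A`, setting
`N := (M^{∨∨}/A)/Tors(M^{∨∨}/A)`, the modules `A^{∨∨}/A`, `M^{∨∨}/M`, `B^{∨∨}/B`, `N^{∨∨}/N`
have finite length and
`length(A^{∨∨}/A) + length(B^{∨∨}/B) = length(M^{∨∨}/M) + length(N^{∨∨}/N)`.
-/

open Module LinearMap

/-- The cokernel `P^{∨∨}/P` of the canonical evaluation map `ε_P : P → P^{∨∨}`. -/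
abbrev evalCoker (R : Type*) [CommRing R] (P : Type*) [AddCommGroup P] [Module R P] :=
  Dual R (Dual R P) ⧸ LinearMap.range (Module.Dual.eval R P)

/-- The `R`-module `P` has length `m`, i.e. it admits a composition series
`⊥ = P₀ ⋖ P₁ ⋖ ⋯ ⋖ P_m = ⊤` of length `m`. -/
def HasLength (R : Type*) [CommRing R] (P : Type*) [AddCommGroup P] [Module R P]
    (m : ℕ) : Prop :=
  ∃ s : CompositionSeries (Submodule R P), s.head = ⊥ ∧ s.last = ⊤ ∧ s.length = m

/-!
Over a Noetherian normal domain the localizations at primes of height at most one are principal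
ideal rings, so a finite torsion-free module `P` is reflexive in codimension one: `P → P^{∨∨}` is
injective with pseudo-null cokernel. By Hartogs' extension theorem dualizing turns an injection
with pseudo-null cokernel into an isomorphism, so if `P` embeds in a reflexive module `V` with
pseudo-null cokernel then `P^{∨∨}/P ≅ V/P`.

Let `A'` be the kernel of `M^{∨∨} → N`. It is reflexive and `A'/A` is pseudo-null, so
`A^{∨∨}/A ≅ A'/A`; similarly `B^{∨∨} ≅ N^{∨∨}` through `B → N → N^{∨∨}`. The map of short exact
sequences from `A → M → B` to `A' → M^{∨∨} → N` has exact cokernel sequence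
`0 → A'/A → M^{∨∨}/M → N/B → 0`, and `B^{∨∨}/B` is an extension of `N^{∨∨}/N` by `N/B`. In
dimension at most two a pseudo-null module has finite length, and additivity of length concludes.

A regular local ring of dimension two is normal because it is factorial: with maximal ideal
`(a, b)`, the element `a` is prime, `R/(a)` is a principal ideal ring, and every prime avoiding `a`
is principal by Nakayama.
-/

section Ring

variable {R : Type*} [CommRing R]

/-- The heart of Hartogs' extension theorem: `z / y` either multiplies `p` into itself, hence is
integral, or it inverts some element of `p`, which then generates `p` locally. -/
theorem height_le_one_of_forall_mem_iff_dvd_mul [IsDomain R] [IsNoetherianRing R]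
    [IsIntegrallyClosed R] {p : Ideal R} [p.IsPrime] {y z : R} (hy : y ≠ 0)
    (hp : ∀ r, r ∈ p ↔ y ∣ r * z) : p.height ≤ 1 := by
  by_cases h : ∀ r ∈ p, ∃ s ∈ p, r * z = y * s
  · let K := FractionRing R
    have hyK : algebraMap R K y ≠ 0 := by simpa using hy
    have hint : IsIntegral R (algebraMap R K z / algebraMap R K y) := by
      refine isIntegral_of_smul_mem_submodule (Submodule.map (Algebra.linearMap R K) p) ?_
        ((IsNoetherian.noetherian p).map _) _ ?_
      · have hyp : algebraMap R K y ∈ Submodule.map (Algebra.linearMap R K) p :=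
          ⟨y, (hp y).2 (dvd_mul_right y z), rfl⟩
        exact fun hbot => hyK (by simpa [hbot] using hyp)
      · rintro _ ⟨r, hr, rfl⟩
        obtain ⟨s, hs, hrs⟩ := h r hr
        refine ⟨s, hs, ?_⟩
        rw [Algebra.linearMap_apply, Algebra.linearMap_apply, smul_eq_mul, div_mul_eq_mul_div,
          eq_div_iff hyK, ← map_mul, ← map_mul, mul_comm s, ← hrs, mul_comm]
    obtain ⟨t, ht⟩ := IsIntegrallyClosed.isIntegral_iff.1 hint
    have hzy : z = t * y := by
      rw [eq_div_iff hyK, ← map_mul] at ht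
      exact (FaithfulSMul.algebraMap_injective R K ht).symm
    have hone : (1 : R) ∈ p := (hp 1).2 ⟨t, by rw [hzy]; ring⟩
    exact absurd hone ((Ideal.ne_top_iff_one p).1 Ideal.IsPrime.ne_top')
  · push Not at h
    obtain ⟨r, hr, hrs⟩ := h
    obtain ⟨s, hs⟩ := (hp r).1 hr
    have hsp : s ∉ p := fun hsp => hrs s hsp hs
    have hmin : p ∈ (Ideal.span {r}).minimalPrimes := by
      refine ⟨⟨inferInstance, (Ideal.span_singleton_le_iff_mem p).2 hr⟩, ?_⟩
      rintro q ⟨hq, hrq⟩ hqp t ht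
      obtain ⟨u, hu⟩ := (hp t).1 ht
      have hst : s * t = r * u := mul_left_cancel₀ hy (by linear_combination r * hu - t * hs)
      have hstq : s * t ∈ q := hst ▸ q.mul_mem_right u ((Ideal.span_singleton_le_iff_mem q).1 hrq)
      exact (hq.mem_or_mem hstq).resolve_left fun h => hsp (hqp h)
    exact Ideal.height_le_one_of_isPrincipal_of_mem_minimalPrimes _ _ hmin

theorem dvd_of_forall_height_le_one [IsDomain R] [IsNoetherianRing R] [IsIntegrallyClosed R]
    {x y : R} (h : ∀ p : Ideal R, p.IsPrime → p.height ≤ 1 → ∃ s ∉ p, y ∣ s * x) : y ∣ x := by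
  by_cases hy : y = 0
  · obtain ⟨s, hs, hsx⟩ := h ⊥ inferInstance (by simp)
    simp_all
  by_contra hyx
  have mk_eq_zero (r : R) : Submodule.Quotient.mk (p := Ideal.span {y}) r = 0 ↔ y ∣ r := by
    rw [Submodule.Quotient.mk_eq_zero, Ideal.mem_span_singleton]
  obtain ⟨p, hp, hxp⟩ := exists_le_isAssociatedPrime_of_isNoetherianRing R
    (Submodule.Quotient.mk (p := Ideal.span {y}) x) (by rwa [ne_eq, mk_eq_zero])
  obtain ⟨hprime, z, rfl⟩ := isAssociatedPrime_iff.1 hp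
  obtain ⟨z, rfl⟩ := Submodule.Quotient.mk_surjective _ z
  have mem_colon (r w : R) :
      r ∈ (⊥ : Submodule R (R ⧸ Ideal.span {y})).colon {Submodule.Quotient.mk w} ↔ y ∣ r * w := by
    rw [Submodule.mem_colon_singleton, Submodule.mem_bot, ← Submodule.Quotient.mk_smul, mk_eq_zero,
      smul_eq_mul]
  obtain ⟨s, hs, hsx⟩ :=
    h _ hprime (height_le_one_of_forall_mem_iff_dvd_mul hy fun r => mem_colon r z)
  exact hs (hxp ((mem_colon s x).2 hsx))

theorem isPrincipalIdealRing_localization_of_height_le_one [IsDomain R] [IsNoetherianRing R]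
    [IsIntegrallyClosed R] (p : Ideal R) [p.IsPrime] (hp : p.height ≤ 1) :
    IsPrincipalIdealRing (Localization.AtPrime p) := by
  have : IsNoetherianRing (Localization.AtPrime p) :=
    IsLocalization.isNoetherianRing p.primeCompl _ inferInstance
  have : IsIntegrallyClosed (Localization.AtPrime p) :=
    isIntegrallyClosed_of_isLocalization _ p.primeCompl p.primeCompl_le_nonZeroDivisors
  have hdim : Ring.KrullDimLE 1 (Localization.AtPrime p) := by
    rw [Ring.krullDimLE_iff, IsLocalization.AtPrime.ringKrullDim_eq_height p]
    exact_mod_cast hp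
  have eq_maximalIdeal (q : Ideal (Localization.AtPrime p)) (hq : q ≠ ⊥) (hq' : q.IsPrime) :
      q = IsLocalRing.maximalIdeal _ :=
    IsLocalRing.eq_maximalIdeal (Ring.krullDimLE_one_iff_of_noZeroDivisors.1 hdim q hq hq')
  have tfae := tfae_of_isNoetherianRing_of_isLocalRing_of_isDomain (Localization.AtPrime p)
  exact (tfae.out 0 3 :).2 ⟨inferInstance, eq_maximalIdeal⟩

/-- By Nakayama, `p = (x) + a p` forces `p = (x)`, where `x` lifts a generator of the image. -/
theorem isPrincipal_of_isPrincipal_map_mk {a : R} (ha : a ∈ (⊥ : Ideal R).jacobson) {p : Ideal R}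
    [hp : p.IsPrime] (hfg : p.FG) (hap : a ∉ p)
    (h : (p.map (Ideal.Quotient.mk (Ideal.span {a}))).IsPrincipal) : p.IsPrincipal := by
  obtain ⟨y, hy⟩ := h
  have hyp : y ∈ p.map (Ideal.Quotient.mk (Ideal.span {a})) :=
    hy ▸ Submodule.mem_span_singleton_self y
  obtain ⟨x, hx, rfl⟩ := (Ideal.mem_map_iff_of_surjective _ Ideal.Quotient.mk_surjective).1 hyp
  refine ⟨x, le_antisymm ?_ ((Ideal.span_singleton_le_iff_mem p).2 hx)⟩
  refine Submodule.le_of_le_smul_of_le_jacobson_bot (I := Ideal.span {a}) hfg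
    ((Ideal.span_singleton_le_iff_mem _).2 ha) fun t ht => ?_
  have hty := Ideal.mem_map_of_mem (Ideal.Quotient.mk (Ideal.span {a})) ht
  rw [hy] at hty
  obtain ⟨r', hr⟩ := Ideal.mem_span_singleton'.1 hty
  obtain ⟨r, rfl⟩ := Ideal.Quotient.mk_surjective r'
  rw [← map_mul, eq_comm, Ideal.Quotient.eq, Ideal.mem_span_singleton] at hr
  obtain ⟨c, hc⟩ := hr
  have hacp : a * c ∈ p := hc ▸ p.sub_mem ht (p.mul_mem_left r hx)
  have hcp : c ∈ p := (hp.mem_or_mem hacp).resolve_left hap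
  exact Submodule.mem_sup.2 ⟨r * x, Ideal.mem_span_singleton'.2 ⟨r, rfl⟩, a * c,
    Ideal.mul_mem_mul (Ideal.mem_span_singleton_self a) hcp, by rw [← hc]; ring⟩

section IsLocalRing

variable [IsNoetherianRing R] [IsLocalRing R] {a b : R}

theorem exists_isPrime_mem_notMem_of_maximalIdeal_eq_span_pair (hdim : ringKrullDim R = 2)
    (hab : IsLocalRing.maximalIdeal R = Ideal.span {a, b}) :
    ∃ q : Ideal R, q.IsPrime ∧ a ∈ q ∧ b ∉ q := by
  by_contra! h
  have hmin : IsLocalRing.maximalIdeal R ∈ (Ideal.span {a}).minimalPrimes := by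
    refine ⟨⟨inferInstance, ?_⟩, fun q ⟨hq, haq⟩ _ => ?_⟩
    · exact hab ▸ Ideal.span_mono (by simp)
    · have ha : a ∈ q := (Ideal.span_singleton_le_iff_mem q).1 haq
      rw [hab, Ideal.span_le]
      rintro x (rfl | rfl)
      exacts [ha, h q hq ha]
  have hheight : (IsLocalRing.maximalIdeal R).height ≤ 1 :=
    Ideal.height_le_one_of_isPrincipal_of_mem_minimalPrimes _ _ hmin
  have hdim_le : ringKrullDim R ≤ 1 := by
    rw [← IsLocalRing.maximalIdeal_height_eq_ringKrullDim]
    exact_mod_cast hheight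
  exact absurd (hdim ▸ hdim_le) (by decide)

theorem prime_of_maximalIdeal_eq_span_pair (hdim : ringKrullDim R = 2)
    (hab : IsLocalRing.maximalIdeal R = Ideal.span {a, b}) : Prime a := by
  obtain ⟨q, hq, haq, hbq⟩ := exists_isPrime_mem_notMem_of_maximalIdeal_eq_span_pair hdim hab
  have ha : a ≠ 0 := by
    rintro rfl
    obtain ⟨q', -, -, h0⟩ := exists_isPrime_mem_notMem_of_maximalIdeal_eq_span_pair hdim
      (hab.trans (congrArg Ideal.span (Set.pair_comm 0 b)))
    exact h0 q'.zero_mem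
  have hqa : q ≤ Ideal.span {a} := by
    refine Submodule.le_of_le_smul_of_le_jacobson_bot (I := IsLocalRing.maximalIdeal R)
      (IsNoetherian.noetherian q) (IsLocalRing.jacobson_eq_maximalIdeal _ bot_ne_top).ge
      fun x hx => ?_
    obtain ⟨r, s, rfl⟩ := Ideal.mem_span_pair.1 (hab ▸ IsLocalRing.le_maximalIdeal hq.ne_top hx)
    have hsb : s * b ∈ q := (q.add_mem_iff_right (q.mul_mem_left r haq)).1 hx
    have hs : s ∈ q := (hq.mem_or_mem hsb).resolve_right hbq
    have hb : b ∈ IsLocalRing.maximalIdeal R := hab ▸ Ideal.subset_span (by simp)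
    exact Submodule.mem_sup.2 ⟨r * a, Ideal.mem_span_singleton'.2 ⟨r, rfl⟩, s * b,
      mul_comm s b ▸ Ideal.mul_mem_mul hb hs, rfl⟩
  have hq_eq : q = Ideal.span {a} := hqa.antisymm ((Ideal.span_singleton_le_iff_mem q).2 haq)
  exact (Ideal.span_singleton_prime ha).1 (hq_eq ▸ hq)

theorem isPrincipalIdealRing_quotient_of_maximalIdeal_eq_span_pair (ha : Prime a)
    (hab : IsLocalRing.maximalIdeal R = Ideal.span {a, b}) :
    IsPrincipalIdealRing (R ⧸ Ideal.span {a}) := by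
  have : (Ideal.span {a}).IsPrime := (Ideal.span_singleton_prime ha.ne_zero).2 ha
  have : IsLocalRing (R ⧸ Ideal.span {a}) :=
    IsLocalRing.of_surjective' (Ideal.Quotient.mk _) Ideal.Quotient.mk_surjective
  have hmap : (IsLocalRing.maximalIdeal R).map (Ideal.Quotient.mk (Ideal.span {a})) =
      IsLocalRing.maximalIdeal (R ⧸ Ideal.span {a}) :=
    IsLocalRing.map_maximalIdeal_of_surjective _ Ideal.Quotient.mk_surjective
  have hmk : Ideal.Quotient.mk (Ideal.span {a}) a = 0 :=
    Ideal.Quotient.eq_zero_iff_mem.2 (Ideal.mem_span_singleton_self a)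
  have hmax : (IsLocalRing.maximalIdeal (R ⧸ Ideal.span {a})).IsPrincipal :=
    ⟨Ideal.Quotient.mk _ b, by
      rw [← hmap, hab, Ideal.map_span, Set.image_pair, hmk, Ideal.span_insert_zero]⟩
  have tfae := tfae_of_isNoetherianRing_of_isLocalRing_of_isDomain (R ⧸ Ideal.span {a})
  exact (tfae.out 0 4 :).2 hmax

theorem uniqueFactorizationMonoid_of_maximalIdeal_eq_span_pair [IsDomain R]
    (hdim : ringKrullDim R = 2) (hab : IsLocalRing.maximalIdeal R = Ideal.span {a, b}) :
    UniqueFactorizationMonoid R := by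
  have ha : Prime a := prime_of_maximalIdeal_eq_span_pair hdim hab
  refine UniqueFactorizationMonoid.iff_exists_prime_mem_of_isPrime.2 fun p hp0 hp => ?_
  by_cases hap : a ∈ p
  · exact ⟨a, hap, ha⟩
  have := isPrincipalIdealRing_quotient_of_maximalIdeal_eq_span_pair ha hab
  have ham : a ∈ IsLocalRing.maximalIdeal R := hab ▸ Ideal.subset_span (by simp)
  have hprinc : p.IsPrincipal := isPrincipal_of_isPrincipal_map_mk
    (by rwa [IsLocalRing.jacobson_eq_maximalIdeal _ bot_ne_top]) (IsNoetherian.noetherian p) hap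
    (IsPrincipalIdealRing.principal _)
  exact ⟨_, Submodule.IsPrincipal.generator_mem p,
    Submodule.IsPrincipal.prime_generator_of_isPrime p hp0⟩

end IsLocalRing

end Ring

section IsPseudoNull

variable {R : Type*} [CommRing R]
  {P : Type*} [AddCommGroup P] [Module R P] {Q : Type*} [AddCommGroup Q] [Module R Q]
  {S : Type*} [AddCommGroup S] [Module R S]

variable (R P) in
/-- A module is pseudo-null if its support has codimension at least `2`, i.e. if it vanishes
locally at every prime of height at most `1`. -/
def IsPseudoNull : Prop :=
  ∀ p ∈ Module.support R P, 2 ≤ p.asIdeal.height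

theorem isPseudoNull_iff_exists_smul_eq_zero :
    IsPseudoNull R P ↔
      ∀ p : Ideal R, p.IsPrime → p.height ≤ 1 → ∀ x : P, ∃ s ∉ p, s • x = 0 := by
  have two_le_iff (p : Ideal R) : 2 ≤ p.height ↔ ¬ p.height ≤ 1 := by
    rw [not_le, ← one_add_one_eq_two, ENat.add_one_le_iff ENat.one_ne_top]
  refine ⟨fun h p hp hht => ?_, fun h p hpP => ?_⟩
  · exact Module.notMem_support_iff'.1 fun hpP => (two_le_iff p).1 (h ⟨p, hp⟩ hpP) hht
  · rw [two_le_iff]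
    exact fun hht => Module.notMem_support_iff'.2 (h p.asIdeal p.isPrime hht) hpP

namespace IsPseudoNull

theorem of_injective (hQ : IsPseudoNull R Q) (f : P →ₗ[R] Q) (hf : Function.Injective f) :
    IsPseudoNull R P :=
  fun p hp => hQ p (Module.support_subset_of_injective f hf hp)

theorem of_surjective (hP : IsPseudoNull R P) (f : P →ₗ[R] Q) (hf : Function.Surjective f) :
    IsPseudoNull R Q :=
  fun p hp => hP p (Module.support_subset_of_surjective f hf hp)

theorem of_exact (hP : IsPseudoNull R P) (hS : IsPseudoNull R S) {f : P →ₗ[R] Q} {g : Q →ₗ[R] S}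
    (hf : Function.Injective f) (hg : Function.Surjective g) (h : Function.Exact f g) :
    IsPseudoNull R Q := by
  intro p hp
  rw [Module.support_of_exact h hf hg] at hp
  exact hp.elim (hP p) (hS p)

end IsPseudoNull

theorem isFiniteLength_of_forall_mem_support_isMaximal [IsNoetherianRing R] [Module.Finite R P]
    (h : ∀ p ∈ Module.support R P, p.asIdeal.IsMaximal) : IsFiniteLength R P := by
  rw [isFiniteLength_iff_isNoetherian_isArtinian]
  refine ⟨inferInstance, ?_⟩
  let I := Module.annihilator R P
  have hart : IsArtinianRing (R ⧸ I) := by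
    rw [isArtinianRing_iff_krullDimLE_zero, Ring.krullDimLE_zero_iff]
    intro J hJ
    have hIJ : I ≤ J.comap (Ideal.Quotient.mk I) := by
      rw [← Ideal.map_le_iff_le_comap, Ideal.map_quotient_self]
      exact bot_le
    have hmax : (J.comap (Ideal.Quotient.mk I)).IsMaximal :=
      h ⟨_, hJ.comap _⟩ (by rwa [Module.support_eq_zeroLocus])
    exact Ideal.isMaximal_of_isIntegral_of_isMaximal_comap J hmax
  let : Module (R ⧸ I) P := Module.quotientAnnihilator
  have : Module.Finite (R ⧸ I) P := Module.Finite.of_restrictScalars_finite R _ _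
  exact isArtinian_of_surjective_algebraMap (R := R ⧸ I) Ideal.Quotient.mk_surjective

theorem IsPseudoNull.isFiniteLength [IsNoetherianRing R] [Module.Finite R P]
    (hP : IsPseudoNull R P) (hdim : ringKrullDim R ≤ 2) : IsFiniteLength R P := by
  refine isFiniteLength_of_forall_mem_support_isMaximal fun p hp => ?_
  have : Nontrivial R := p.nontrivial
  have : FiniteRingKrullDim R := finiteRingKrullDim_iff_ne_bot_and_top.2
    ⟨ne_bot_of_le_ne_bot (by decide) ringKrullDim_nonneg_of_nontrivial,
      ne_top_of_le_ne_top (by decide) hdim⟩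
  refine Ideal.isMaximal_of_height_eq_ringKrullDim (le_antisymm ?_ ?_)
  · exact Ideal.height_le_ringKrullDim_of_isPrime
  · exact hdim.trans (WithBot.coe_le_coe.2 (hP p hp))

end IsPseudoNull

section Factorization

variable {R : Type*} [CommRing R]
  {P : Type*} [AddCommGroup P] [Module R P] {Q : Type*} [AddCommGroup Q] [Module R Q]

theorem exists_comp_eq_smul_id_of_free_localizedModule [Module.FinitePresentation R P]
    (S : Submonoid R) [Module.Free (Localization S) (LocalizedModule S P)] :
    ∃ s ∈ S, ∃ (n : ℕ) (φ : (Fin n → R) →ₗ[R] P) (ψ : P →ₗ[R] (Fin n → R)),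
      φ ∘ₗ ψ = s • LinearMap.id := by
  obtain ⟨n, ⟨basis⟩⟩ : ∃ n, Nonempty (Basis (Fin n) (Localization S) (LocalizedModule S P)) :=
    ⟨_, ⟨(Module.Free.chooseBasis _ _).reindex (Fintype.equivFin _)⟩⟩
  let e := basis.equivFun.restrictScalars R
  let ι := LocalizedModule.mkLinearMap S P
  let ιFree : (Fin n → R) →ₗ[R] (Fin n → Localization S) :=
    LinearMap.pi fun i => Algebra.linearMap R (Localization S) ∘ₗ LinearMap.proj i
  obtain ⟨ψ, s, hψ⟩ :=
    Module.FinitePresentation.exists_lift_of_isLocalizedModule S ιFree (e.toLinearMap ∘ₗ ι)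
  obtain ⟨φ, t, hφ⟩ :=
    Module.FinitePresentation.exists_lift_of_isLocalizedModule S ι (e.symm.toLinearMap ∘ₗ ιFree)
  have hcomp : ι ∘ₗ (φ ∘ₗ ψ) = ι ∘ₗ ((t * s) • LinearMap.id) := by
    rw [← LinearMap.comp_assoc, hφ, LinearMap.smul_comp, LinearMap.comp_assoc, hψ]
    ext x
    simp [mul_smul, Submonoid.smul_def]
  obtain ⟨u, hu⟩ := Module.Finite.exists_smul_of_comp_eq_of_isLocalizedModule S ι _ _ hcomp
  refine ⟨u * (t * s), (u * (t * s)).2, n, u • φ, ψ, ?_⟩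
  rw [LinearMap.smul_comp, hu, smul_smul]
  rfl

variable {s : R} {φ : Q →ₗ[R] P} {ψ : P →ₗ[R] Q}

theorem smul_eq_zero_of_eval_eq_zero [IsReflexive R Q] (h : φ ∘ₗ ψ = s • LinearMap.id) {x : P}
    (hx : Dual.eval R P x = 0) : s • x = 0 := by
  have hψx : ψ x = 0 := by
    apply (bijective_dual_eval R Q).1
    rw [map_zero]
    ext f
    exact LinearMap.congr_fun hx (f ∘ₗ ψ)
  simpa [hψx] using (LinearMap.congr_fun h x).symm

theorem smul_mem_range_eval [IsReflexive R Q] (h : φ ∘ₗ ψ = s • LinearMap.id)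
    (z : Dual R (Dual R P)) : s • z ∈ LinearMap.range (Dual.eval R P) := by
  obtain ⟨y, hy⟩ := (bijective_dual_eval R Q).2 (ψ.dualMap.dualMap z)
  refine ⟨φ y, LinearMap.ext fun f => ?_⟩
  calc f (φ y) = Dual.eval R Q y (f ∘ₗ φ) := rfl
    _ = z (f ∘ₗ (φ ∘ₗ ψ)) := by rw [hy]; rfl
    _ = (s • z) f := by rw [h, LinearMap.comp_smul, LinearMap.comp_id, map_smul]; rfl

end Factorization

section TorsionFree

variable {R : Type*} [CommRing R] [IsDomain R] [IsNoetherianRing R]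
  {P : Type*} [AddCommGroup P] [Module R P] [Module.Finite R P] [IsTorsionFree R P]

theorem exists_comp_eq_smul_id_of_isPrincipalIdealRing_localization (p : Ideal R) [p.IsPrime]
    [IsPrincipalIdealRing (Localization.AtPrime p)] :
    ∃ s ∉ p, ∃ (n : ℕ) (φ : (Fin n → R) →ₗ[R] P) (ψ : P →ₗ[R] (Fin n → R)),
      φ ∘ₗ ψ = s • LinearMap.id := by
  have := Module.finitePresentation_of_finite R P
  have hfree : Module.Free (Localization.AtPrime p) (LocalizedModule p.primeCompl P) :=
    inferInstance
  exact exists_comp_eq_smul_id_of_free_localizedModule p.primeCompl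

theorem dual_eval_injective : Function.Injective (Dual.eval R P) := by
  have := Module.finitePresentation_of_finite R P
  obtain ⟨s, hs, n, φ, ψ, h⟩ :=
    exists_comp_eq_smul_id_of_free_localizedModule (P := P) (nonZeroDivisors R)
  refine (injective_iff_map_eq_zero _).2 fun x hx => ?_
  exact (smul_eq_zero.1 (smul_eq_zero_of_eval_eq_zero h hx)).resolve_left
    (nonZeroDivisors.ne_zero hs)

theorem isPseudoNull_evalCoker [IsIntegrallyClosed R] : IsPseudoNull R (evalCoker R P) := by
  refine isPseudoNull_iff_exists_smul_eq_zero.2 fun p hp hht => ?_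
  have := isPrincipalIdealRing_localization_of_height_le_one p hht
  obtain ⟨s, hs, n, φ, ψ, h⟩ :=
    exists_comp_eq_smul_id_of_isPrincipalIdealRing_localization (P := P) p
  refine (Submodule.Quotient.forall _).2 fun z => ⟨s, hs, ?_⟩
  rw [← Submodule.Quotient.mk_smul, Submodule.Quotient.mk_eq_zero]
  exact smul_mem_range_eval h z

end TorsionFree

section Reflexive

variable {R : Type*} [CommRing R] [IsDomain R]
  {P : Type*} [AddCommGroup P] [Module R P] {Q : Type*} [AddCommGroup Q] [Module R Q]

theorem exists_ne_zero_smul_mem_range_eval [Module.FinitePresentation R P]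
    (z : Dual R (Dual R P)) : ∃ s : R, s ≠ 0 ∧ s • z ∈ LinearMap.range (Dual.eval R P) := by
  have hfree : Module.Free (FractionRing R) (LocalizedModule (nonZeroDivisors R) P) :=
    inferInstance
  obtain ⟨s, hs, n, φ, ψ, h⟩ :=
    exists_comp_eq_smul_id_of_free_localizedModule (P := P) (nonZeroDivisors R)
  exact ⟨s, nonZeroDivisors.ne_zero hs, smul_mem_range_eval h z⟩

theorem dualMap_injective_of_forall_exists_smul_mem_range {f : P →ₗ[R] Q}
    (hf : ∀ q, ∃ s : R, s ≠ 0 ∧ s • q ∈ LinearMap.range f) : Function.Injective f.dualMap := by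
  refine (injective_iff_map_eq_zero _).2 fun g hg => LinearMap.ext fun q => ?_
  obtain ⟨s, hs, x, hx⟩ := hf q
  have hsq : s * g q = 0 := by
    rw [← smul_eq_mul, ← map_smul, ← hx]
    exact LinearMap.congr_fun hg x
  exact (mul_eq_zero.1 hsq).resolve_left hs

theorem isReflexive_dual [Module.FinitePresentation R P] : IsReflexive R (Dual R P) := by
  have hleft : Function.LeftInverse (Dual.eval R P).dualMap (Dual.eval R (Dual R P)) :=
    fun _ => rfl
  have hinj : Function.Injective (Dual.eval R P).dualMap :=
    dualMap_injective_of_forall_exists_smul_mem_range exists_ne_zero_smul_mem_range_eval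
  exact ⟨hleft.injective, (hleft.rightInverse_of_injective hinj).surjective⟩

theorem isReflexive_ker [IsNoetherianRing R] [Module.Finite R P] [IsReflexive R P]
    [IsTorsionFree R Q] (π : P →ₗ[R] Q) : IsReflexive R (LinearMap.ker π) := by
  let ι := (LinearMap.ker π).subtype
  have eval_comp (x : LinearMap.ker π) :
      Dual.eval R P x = ι.dualMap.dualMap (Dual.eval R _ x) := rfl
  refine ⟨fun x y hxy => ?_, fun z => ?_⟩
  · exact Subtype.ext ((bijective_dual_eval R P).1 (by rw [eval_comp, eval_comp, hxy]))
  · have := Module.finitePresentation_of_finite R (LinearMap.ker π)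
    obtain ⟨s, hs, x, hx⟩ := exists_ne_zero_smul_mem_range_eval z
    obtain ⟨v, hv⟩ := (bijective_dual_eval R P).2 (ι.dualMap.dualMap z)
    have hsv : s • v = x := (bijective_dual_eval R P).1 <| by
      rw [map_smul, hv, ← map_smul, ← hx, eval_comp]
    have hπv : π v = 0 := by
      have : s • π v = 0 := by rw [← map_smul, hsv, x.2]
      exact (smul_eq_zero.1 this).resolve_left hs
    refine ⟨⟨v, hπv⟩, smul_right_injective _ hs ?_⟩
    change s • Dual.eval R _ _ = s • z
    rw [← hx, ← map_smul]
    exact congrArg _ (Subtype.ext hsv)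

end Reflexive

section PseudoNullCokernel

variable {R : Type*} [CommRing R]
  {P : Type*} [AddCommGroup P] [Module R P] {Q : Type*} [AddCommGroup Q] [Module R Q]
  {f : P →ₗ[R] Q}

theorem IsPseudoNull.exists_smul_mem_range (hcoker : IsPseudoNull R (Q ⧸ LinearMap.range f))
    {p : Ideal R} (hp : p.IsPrime) (hht : p.height ≤ 1) (q : Q) :
    ∃ s ∉ p, s • q ∈ LinearMap.range f := by
  obtain ⟨s, hs, hsq⟩ :=
    isPseudoNull_iff_exists_smul_eq_zero.1 hcoker p hp hht (Submodule.Quotient.mk q)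
  exact ⟨s, hs, by rwa [← Submodule.Quotient.mk_smul, Submodule.Quotient.mk_eq_zero] at hsq⟩

variable [IsDomain R]

theorem IsPseudoNull.exists_ne_zero_smul_mem_range
    (hcoker : IsPseudoNull R (Q ⧸ LinearMap.range f)) (q : Q) :
    ∃ s : R, s ≠ 0 ∧ s • q ∈ LinearMap.range f := by
  simpa using hcoker.exists_smul_mem_range (p := ⊥) inferInstance (by simp) q

variable [IsNoetherianRing R] [IsIntegrallyClosed R]

theorem dvd_dual_apply_of_eq_smul (hf : Function.Injective f)
    (hcoker : IsPseudoNull R (Q ⧸ LinearMap.range f)) (k : Dual R P) {s : R} {x : P} {q : Q}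
    (h : f x = s • q) : s ∣ k x := by
  refine dvd_of_forall_height_le_one fun p hp hht => ?_
  obtain ⟨t, ht, y, hy⟩ := hcoker.exists_smul_mem_range hp hht q
  have htx : t • x = s • y := hf (by rw [map_smul, map_smul, h, hy, smul_comm])
  exact ⟨t, ht, k y, by simpa using congrArg k htx⟩

theorem exists_forall_dual_apply_eq_mul (hf : Function.Injective f)
    (hcoker : IsPseudoNull R (Q ⧸ LinearMap.range f)) (k : Dual R P) (q : Q) :
    ∃ r : R, ∀ (s : R) (x : P), f x = s • q → k x = s * r := by
  obtain ⟨t, ht, y, hy⟩ := hcoker.exists_ne_zero_smul_mem_range q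
  obtain ⟨r, hr⟩ := dvd_dual_apply_of_eq_smul hf hcoker k hy
  refine ⟨r, fun s x hx => mul_left_cancel₀ ht ?_⟩
  have htx : t • x = s • y := hf (by rw [map_smul, map_smul, hx, hy, smul_comm])
  calc t * k x = s * k y := by simpa using congrArg k htx
    _ = t * (s * r) := by rw [hr]; ring

/-- A functional `k` on `P` extends to `Q` by `q ↦ k (s q) / s` for any `s ≠ 0` with `s q ∈ P`. -/
theorem dualMap_bijective_of_isPseudoNull (hf : Function.Injective f)
    (hcoker : IsPseudoNull R (Q ⧸ LinearMap.range f)) : Function.Bijective f.dualMap := by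
  refine ⟨dualMap_injective_of_forall_exists_smul_mem_range hcoker.exists_ne_zero_smul_mem_range,
    fun k => ?_⟩
  choose r hr using exists_forall_dual_apply_eq_mul hf hcoker k
  choose s hs x hx using hcoker.exists_ne_zero_smul_mem_range
  let extension : Dual R Q :=
    { toFun := r
      map_add' := fun q q' => by
        refine mul_left_cancel₀ (mul_ne_zero (hs q) (hs q')) ?_
        have hadd : f (s q' • x q + s q • x q') = (s q * s q') • (q + q') := by
          rw [map_add, map_smul, map_smul, hx, hx]
          module
        rw [← hr _ _ _ hadd, map_add, map_smul, map_smul, hr _ _ _ (hx q), hr _ _ _ (hx q')]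
        simp only [smul_eq_mul]
        ring
      map_smul' := fun c q => by
        refine mul_left_cancel₀ (hs q) ?_
        have hsmul : f (c • x q) = s q • c • q := by rw [map_smul, hx, smul_comm]
        rw [← hr _ _ _ hsmul, map_smul, hr _ _ _ (hx q)]
        simp only [smul_eq_mul, RingHom.id_apply]
        ring }
  exact ⟨extension, LinearMap.ext fun y =>
    ((hr (f y) 1 y (one_smul R _).symm).trans (one_mul _)).symm⟩

theorem nonempty_evalCoker_equiv_quotient_range [IsReflexive R Q] (hf : Function.Injective f)
    (hcoker : IsPseudoNull R (Q ⧸ LinearMap.range f)) :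
    Nonempty (evalCoker R P ≃ₗ[R] Q ⧸ LinearMap.range f) := by
  let dualEquiv : Dual R Q ≃ₗ[R] Dual R P :=
    LinearEquiv.ofBijective _ (dualMap_bijective_of_isPseudoNull hf hcoker)
  let e : Dual R (Dual R P) ≃ₗ[R] Q := dualEquiv.dualMap ≪≫ₗ (evalEquiv R Q).symm
  have he : e.toLinearMap ∘ₗ Dual.eval R P = f := by
    ext x
    exact (evalEquiv R Q).symm_apply_apply (f x)
  exact ⟨Submodule.Quotient.equiv _ _ e (by rw [← LinearMap.range_comp, he])⟩

end PseudoNullCokernel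

section Exact

variable {R : Type*} [CommRing R]
  {A M B A' V N : Type*} [AddCommGroup A] [Module R A] [AddCommGroup M] [Module R M]
  [AddCommGroup B] [Module R B] [AddCommGroup A'] [Module R A'] [AddCommGroup V] [Module R V]
  [AddCommGroup N] [Module R N]

theorem exists_exact_quotient_range {f : A →ₗ[R] M} {g : M →ₗ[R] B} {f' : A' →ₗ[R] V}
    {g' : V →ₗ[R] N} {α : A →ₗ[R] A'} {μ : M →ₗ[R] V} {β : B →ₗ[R] N}
    (hfg : Function.Exact f g) (hg : Function.Surjective g)
    (hf' : Function.Injective f') (hfg' : Function.Exact f' g') (hg' : Function.Surjective g')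
    (hα : f' ∘ₗ α = μ ∘ₗ f) (hβ : g' ∘ₗ μ = β ∘ₗ g) (hβ_inj : Function.Injective β) :
    ∃ (i : A' ⧸ LinearMap.range α →ₗ[R] V ⧸ LinearMap.range μ)
      (q : V ⧸ LinearMap.range μ →ₗ[R] N ⧸ LinearMap.range β),
      Function.Injective i ∧ Function.Surjective q ∧ Function.Exact i q := by
  have hα' (a : A) : f' (α a) = μ (f a) := LinearMap.congr_fun hα a
  have hβ' (m : M) : g' (μ m) = β (g m) := LinearMap.congr_fun hβ m
  have mem_range_of_map_mem (a' : A') (h : f' a' ∈ LinearMap.range μ) :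
      a' ∈ LinearMap.range α := by
    obtain ⟨m, hm⟩ := h
    have hgm : g m = 0 := hβ_inj (by rw [← hβ', hm, hfg'.apply_apply_eq_zero, map_zero])
    obtain ⟨a, rfl⟩ := (hfg m).1 hgm
    exact ⟨a, hf' ((hα' a).trans hm)⟩
  refine ⟨Submodule.mapQ _ _ f' ?_, Submodule.mapQ _ _ g' ?_, ?_, ?_, ?_⟩
  · rintro _ ⟨a, rfl⟩
    exact ⟨f a, (hα' a).symm⟩
  · rintro _ ⟨m, rfl⟩
    exact ⟨g m, (hβ' m).symm⟩
  · refine (injective_iff_map_eq_zero _).2 ((Submodule.Quotient.forall _).2 fun a' ha' => ?_)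
    rw [Submodule.mapQ_apply, Submodule.Quotient.mk_eq_zero] at ha'
    exact (Submodule.Quotient.mk_eq_zero _).2 (mem_range_of_map_mem a' ha')
  · refine (Submodule.Quotient.forall _).2 fun n => ?_
    obtain ⟨v, rfl⟩ := hg' n
    exact ⟨Submodule.Quotient.mk v, rfl⟩
  · refine (Submodule.Quotient.forall _).2 fun v => ⟨fun hv => ?_, ?_⟩
    · rw [Submodule.mapQ_apply, Submodule.Quotient.mk_eq_zero] at hv
      obtain ⟨b, hb⟩ := hv
      obtain ⟨m, rfl⟩ := hg b
      obtain ⟨a', ha'⟩ := (hfg' (v - μ m)).1 (by rw [map_sub, hβ', hb, sub_self])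
      refine ⟨Submodule.Quotient.mk a', (Submodule.Quotient.eq _).2 ⟨-m, ?_⟩⟩
      rw [ha', map_neg]
      abel
    · rintro ⟨x, hx⟩
      obtain ⟨a', rfl⟩ := Submodule.Quotient.mk_surjective _ x
      rw [← hx, Submodule.mapQ_apply, Submodule.mapQ_apply, hfg'.apply_apply_eq_zero,
        Submodule.Quotient.mk_zero]

theorem exists_exact_quotient_range_comp {f : A →ₗ[R] M} {g : M →ₗ[R] B}
    (hg : Function.Injective g) :
    ∃ (i : M ⧸ LinearMap.range f →ₗ[R] B ⧸ LinearMap.range (g ∘ₗ f))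
      (q : B ⧸ LinearMap.range (g ∘ₗ f) →ₗ[R] B ⧸ LinearMap.range g),
      Function.Injective i ∧ Function.Surjective q ∧ Function.Exact i q := by
  have hle : LinearMap.range (g ∘ₗ f) ≤ LinearMap.range g := LinearMap.range_comp_le_range f g
  refine ⟨Submodule.mapQ _ _ g ?_, Submodule.factor hle, ?_, Submodule.factor_surjective hle, ?_⟩
  · rintro _ ⟨a, rfl⟩
    exact ⟨a, rfl⟩
  · refine (injective_iff_map_eq_zero _).2 ((Submodule.Quotient.forall _).2 fun m hm => ?_)
    rw [Submodule.mapQ_apply, Submodule.Quotient.mk_eq_zero] at hm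
    obtain ⟨a, ha⟩ := hm
    exact (Submodule.Quotient.mk_eq_zero _).2 ⟨a, hg ha⟩
  · refine (Submodule.Quotient.forall _).2 fun b => ?_
    rw [← Submodule.mkQ_apply, Submodule.factor_mk, Submodule.mkQ_apply, Submodule.mkQ_apply,
      Submodule.Quotient.mk_eq_zero]
    refine ⟨fun ⟨m, hm⟩ => ⟨Submodule.Quotient.mk m, by rw [Submodule.mapQ_apply, hm]⟩, ?_⟩
    rintro ⟨x, hx⟩
    obtain ⟨m, rfl⟩ := Submodule.Quotient.mk_surjective _ x
    obtain ⟨a, ha⟩ := (Submodule.Quotient.eq _).1 hx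
    exact ⟨m - f a, by rw [map_sub, ← LinearMap.comp_apply, ha, sub_sub_cancel]⟩

end Exact

section Length

variable {R : Type*} [CommRing R] [IsDomain R] [IsNoetherianRing R] [IsIntegrallyClosed R]
  {M V N : Type*} [AddCommGroup M] [Module R M] [AddCommGroup V] [Module R V]
  [AddCommGroup N] [Module R N]

theorem length_evalCoker_eq_add [Module.Finite R N] [IsTorsionFree R N] {β : M →ₗ[R] N}
    (hβ : Function.Injective β) (hcoker : IsPseudoNull R (N ⧸ LinearMap.range β)) :
    Module.length R (evalCoker R M) =
      Module.length R (N ⧸ LinearMap.range β) + Module.length R (evalCoker R N) := by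
  obtain ⟨i, q, hi, hq, hiq⟩ :=
    exists_exact_quotient_range_comp (f := β) (dual_eval_injective (P := N))
  have := Module.finitePresentation_of_finite R N
  have : IsReflexive R (Dual R N) := isReflexive_dual
  obtain ⟨e⟩ := nonempty_evalCoker_equiv_quotient_range (dual_eval_injective.comp hβ)
    (hcoker.of_exact isPseudoNull_evalCoker hi hq hiq)
  rw [e.length_eq, Module.length_eq_add_of_exact i q hi hq hiq]

theorem length_evalCoker_add_length_evalCoker_quotient [Module.Finite R V] [IsReflexive R V]
    [IsTorsionFree R N] {μ : M →ₗ[R] V} {π : V →ₗ[R] N} (hμ : Function.Injective μ)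
    (hcoker : IsPseudoNull R (V ⧸ LinearMap.range μ)) (hπ : Function.Surjective π)
    {K : Submodule R M} (hK : LinearMap.ker (π ∘ₗ μ) = K) :
    Module.length R (evalCoker R K) + Module.length R (evalCoker R (M ⧸ K)) =
      Module.length R (V ⧸ LinearMap.range μ) + Module.length R (evalCoker R N) := by
  subst hK
  have : Module.Finite R N := Module.Finite.of_surjective π hπ
  have : IsReflexive R (LinearMap.ker π) := isReflexive_ker π
  let K := LinearMap.ker (π ∘ₗ μ)
  let α : K →ₗ[R] LinearMap.ker π := μ.restrict fun _ hx => hx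
  let β : M ⧸ K →ₗ[R] N := K.liftQ (π ∘ₗ μ) le_rfl
  have hα : Function.Injective α := fun x y hxy => Subtype.ext (hμ (congrArg Subtype.val hxy))
  have hβ : Function.Injective β := LinearMap.ker_eq_bot.1 (Submodule.ker_liftQ_eq_bot' _ _ rfl)
  obtain ⟨i, q, hi, hq, hiq⟩ := exists_exact_quotient_range (α := α) (μ := μ) (β := β)
    (LinearMap.exact_subtype_mkQ K) K.mkQ_surjective Subtype.val_injective
    (LinearMap.exact_subtype_ker_map π) hπ rfl (K.liftQ_mkQ _ _).symm hβ
  obtain ⟨e⟩ := nonempty_evalCoker_equiv_quotient_range hα (hcoker.of_injective i hi)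
  rw [e.length_eq, length_evalCoker_eq_add hβ (hcoker.of_surjective q hq), ← add_assoc,
    ← Module.length_eq_add_of_exact i q hi hq hiq]

end Length

section Saturation

variable {R : Type*} [CommRing R]
  {M V : Type*} [AddCommGroup M] [Module R M] [AddCommGroup V] [Module R V]

theorem ker_mkQ_torsion_comp_mkQ_map_comp {μ : M →ₗ[R] V} (hμ : Function.Injective μ)
    (A : Submodule R M) (hA : Submodule.torsion R (M ⧸ A) = ⊥) :
    LinearMap.ker (((Submodule.torsion R (V ⧸ A.map μ)).mkQ ∘ₗ (A.map μ).mkQ) ∘ₗ μ) = A := by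
  ext x
  have smul_mem_iff (a : nonZeroDivisors R) : a • μ x ∈ A.map μ ↔ a • x ∈ A := by
    rw [← map_smul_of_tower]
    exact hμ.mem_set_image
  calc x ∈ LinearMap.ker (((Submodule.torsion R (V ⧸ A.map μ)).mkQ ∘ₗ (A.map μ).mkQ) ∘ₗ μ)
    _ ↔ (A.map μ).mkQ (μ x) ∈ Submodule.torsion R (V ⧸ A.map μ) :=
      Submodule.Quotient.mk_eq_zero _
    _ ↔ ∃ a : nonZeroDivisors R, a • μ x ∈ A.map μ :=
      exists_congr fun _ => Submodule.Quotient.mk_eq_zero _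
    _ ↔ ∃ a : nonZeroDivisors R, a • x ∈ A := exists_congr smul_mem_iff
    _ ↔ A.mkQ x ∈ Submodule.torsion R (M ⧸ A) :=
      exists_congr fun _ => (Submodule.Quotient.mk_eq_zero _).symm
    _ ↔ x ∈ A := by rw [hA, Submodule.mem_bot, Submodule.mkQ_apply, Submodule.Quotient.mk_eq_zero]

end Saturation

section HasLength

variable {R : Type*} [CommRing R]

theorem isFiniteLength_evalCoker [IsDomain R] [IsNoetherianRing R] [IsIntegrallyClosed R]
    (hdim : ringKrullDim R ≤ 2) {P : Type*} [AddCommGroup P] [Module R P] [Module.Finite R P]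
    [IsTorsionFree R P] : IsFiniteLength R (evalCoker R P) :=
  isPseudoNull_evalCoker.isFiniteLength hdim

theorem exists_hasLength_length_eq {P : Type*} [AddCommGroup P] [Module R P]
    (h : IsFiniteLength R P) : ∃ n : ℕ, HasLength R P n ∧ Module.length R P = n := by
  obtain ⟨s, hhead, hlast⟩ := isFiniteLength_iff_exists_compositionSeries.1 h
  exact ⟨s.length, ⟨s, hhead, hlast, rfl⟩, (Module.length_compositionSeries s hhead hlast).symm⟩

theorem exists_hasLength_add_eq_add {P Q S T : Type*} [AddCommGroup P] [Module R P]
    [AddCommGroup Q] [Module R Q] [AddCommGroup S] [Module R S] [AddCommGroup T] [Module R T]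
    (hP : IsFiniteLength R P) (hQ : IsFiniteLength R Q) (hS : IsFiniteLength R S)
    (hT : IsFiniteLength R T)
    (h : Module.length R P + Module.length R S = Module.length R Q + Module.length R T) :
    ∃ a b c d : ℕ,
      HasLength R P a ∧ HasLength R Q b ∧ HasLength R S c ∧ HasLength R T d ∧ a + c = b + d := by
  obtain ⟨a, ha, hPa⟩ := exists_hasLength_length_eq hP
  obtain ⟨b, hb, hQb⟩ := exists_hasLength_length_eq hQ
  obtain ⟨c, hc, hSc⟩ := exists_hasLength_length_eq hS
  obtain ⟨d, hd, hTd⟩ := exists_hasLength_length_eq hT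
  rw [hPa, hQb, hSc, hTd] at h
  exact ⟨a, b, c, d, ha, hb, hc, hd, mod_cast h⟩

end HasLength

theorem stmt_3_general {R : Type*} [CommRing R] [IsDomain R] [IsNoetherianRing R]
    [IsIntegrallyClosed R] (hdim : ringKrullDim R ≤ 2)
    {M : Type*} [AddCommGroup M] [Module R M] [Module.Finite R M]
    (htfM : Submodule.torsion R M = ⊥)
    (A : Submodule R M) (htfB : Submodule.torsion R (M ⧸ A) = ⊥) :
    IsFiniteLength R (evalCoker R ↥A) ∧
    IsFiniteLength R (evalCoker R M) ∧
    IsFiniteLength R (evalCoker R (M ⧸ A)) ∧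
    IsFiniteLength R (evalCoker R
      ((Dual R (Dual R M) ⧸ A.map (Module.Dual.eval R M)) ⧸
        Submodule.torsion R (Dual R (Dual R M) ⧸ A.map (Module.Dual.eval R M)))) ∧
    ∃ a b c d : ℕ,
      HasLength R (evalCoker R ↥A) a ∧
      HasLength R (evalCoker R M) b ∧
      HasLength R (evalCoker R (M ⧸ A)) c ∧
      HasLength R (evalCoker R
        ((Dual R (Dual R M) ⧸ A.map (Module.Dual.eval R M)) ⧸
          Submodule.torsion R (Dual R (Dual R M) ⧸ A.map (Module.Dual.eval R M)))) d ∧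
      a + c = b + d := by
  have : IsTorsionFree R M := Submodule.isTorsionFree_iff_torsion_eq_bot.2 htfM
  have : IsTorsionFree R (M ⧸ A) := Submodule.isTorsionFree_iff_torsion_eq_bot.2 htfB
  have := Module.finitePresentation_of_finite R M
  have : IsReflexive R (Dual R M) := isReflexive_dual
  have hker := ker_mkQ_torsion_comp_mkQ_map_comp (dual_eval_injective (P := M)) A htfB
  have hA : IsFiniteLength R (evalCoker R A) := isFiniteLength_evalCoker hdim
  have hM : IsFiniteLength R (evalCoker R M) := isFiniteLength_evalCoker hdim
  have hB : IsFiniteLength R (evalCoker R (M ⧸ A)) := isFiniteLength_evalCoker hdim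
  have hN := isFiniteLength_evalCoker hdim (P := (Dual R (Dual R M) ⧸ A.map (Dual.eval R M)) ⧸
    Submodule.torsion R (Dual R (Dual R M) ⧸ A.map (Dual.eval R M)))
  refine ⟨hA, hM, hB, hN, exists_hasLength_add_eq_add hA hM hB hN ?_⟩
  exact length_evalCoker_add_length_evalCoker_quotient dual_eval_injective isPseudoNull_evalCoker
    ((Submodule.mkQ_surjective _).comp (Submodule.mkQ_surjective _)) hker

theorem stmt_3 {R : Type*} [CommRing R] [IsDomain R] [IsNoetherianRing R] [IsLocalRing R]
    -- `R` is a regular local ring of Krull dimension 2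
    (hdim : ringKrullDim R = 2)
    (hreg : ∃ a b : R, Ideal.span {a, b} = IsLocalRing.maximalIdeal R)
    {M : Type*} [AddCommGroup M] [Module R M] [Module.Finite R M]
    -- `M` is torsion-free of rank 2
    (htfM : Submodule.torsion R M = ⊥)
    (hrkM : Module.finrank (FractionRing R) (LocalizedModule (nonZeroDivisors R) M) = 2)
    -- `A ⊆ M` is a submodule of rank 1
    (A : Submodule R M)
    (hrkA : Module.finrank (FractionRing R) (LocalizedModule (nonZeroDivisors R) ↥A) = 1)
    -- the quotient `B := M ⧸ A` is torsion-free
    (htfB : Submodule.torsion R (M ⧸ A) = ⊥) :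
    -- `A^{∨∨}/A`, `M^{∨∨}/M`, `B^{∨∨}/B` and `N^{∨∨}/N` have finite length, where `A` is
    -- regarded inside `M^{∨∨}` via `ε_M` and `N := (M^{∨∨}/A)/Tors(M^{∨∨}/A)`, and
    -- `length(A^{∨∨}/A) + length(B^{∨∨}/B) = length(M^{∨∨}/M) + length(N^{∨∨}/N)`
    IsFiniteLength R (evalCoker R ↥A) ∧
    IsFiniteLength R (evalCoker R M) ∧
    IsFiniteLength R (evalCoker R (M ⧸ A)) ∧
    IsFiniteLength R (evalCoker R
      ((Dual R (Dual R M) ⧸ A.map (Module.Dual.eval R M)) ⧸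
        Submodule.torsion R (Dual R (Dual R M) ⧸ A.map (Module.Dual.eval R M)))) ∧
    ∃ a b c d : ℕ,
      HasLength R (evalCoker R ↥A) a ∧
      HasLength R (evalCoker R M) b ∧
      HasLength R (evalCoker R (M ⧸ A)) c ∧
      HasLength R (evalCoker R
        ((Dual R (Dual R M) ⧸ A.map (Module.Dual.eval R M)) ⧸
          Submodule.torsion R (Dual R (Dual R M) ⧸ A.map (Module.Dual.eval R M)))) d ∧
      a + c = b + d := by
  obtain ⟨a, b, hab⟩ := hreg
  have := uniqueFactorizationMonoid_of_maximalIdeal_eq_span_pair hdim hab.symm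
  exact stmt_3_general hdim.le htfM A htfB
end

section
/- Let R be a regular local ring of Krull dimension 2, and let A ⊆ A′ be finitely generated torsion-free R-modules of rank 1 such that the quotient A′/A has finite length. Then the map A^{∨∨} → A′^{∨∨} obtained by dualizing the inclusion A → A′ twice is an isomorphism, the modules A^{∨∨}/A and A′^{∨∨}/A′ have finite length, and length(A^{∨∨}/A) = length(A′^{∨∨}/A′) + length(A′/A). -/
/-!
Statement 4 (local form of step (2)(b) in Corollary 3.2 of the paper): over a regular local ring
of Krull dimension 2, if `A ⊆ A'` are finitely generated torsion-free rank 1 modules with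
`A'/A` of finite length, then the double dual of the inclusion is an isomorphism
`A^{∨∨} ≅ A'^{∨∨}`, the modules `A^{∨∨}/A` and `A'^{∨∨}/A'` have finite length, and
`length(A^{∨∨}/A) = length(A'^{∨∨}/A') + length(A'/A)`.
-/

open Module LinearMap

/-!
A finite-length quotient `A'/A` is annihilated by a product of maximal ideals, each of grade at
least two because `R` is normal and its maximal ideals have height two. Multiplying by annihilating
elements and dividing again extends every functional uniquely from `A` to `A'`, so already
`A'^∨ → A^∨` is an isomorphism.

If `P` is a nonmaximal prime, then `R_P` is a principal ideal domain and `A'_P` is free, so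
multiplication by some `s ∉ P` factors as `A' → Rⁿ → A'`. By naturality of the evaluation map, `s`
kills `A'^{∨∨}/A'`. Only maximal primes therefore contain the annihilator of `A'^{∨∨}/A'`, which
forces finite length, and likewise for `A`. The length formula is additivity along
`A ⊆ A' ⊆ A'^{∨∨} = A^{∨∨}`.

A regular local ring of dimension two is normal because it is factorial: a generator `a` of its
maximal ideal `(a, b)` is prime, `R/(a)` is a principal ideal domain, and Nakayama's lemma lifts
generators of height-one primes from `R/(a)`.
-/

section Length

variable {R M N : Type*} [CommRing R] [AddCommGroup M] [Module R M] [AddCommGroup N] [Module R N]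

lemma exists_hasLength_and_eq_length (h : IsFiniteLength R M) :
    ∃ m : ℕ, HasLength R M m ∧ (m : ℕ∞) = Module.length R M := by
  obtain ⟨s, head_eq, last_eq⟩ := isFiniteLength_iff_exists_compositionSeries.mp h
  exact ⟨s.length, ⟨s, head_eq, last_eq, rfl⟩, Module.length_compositionSeries s head_eq last_eq⟩

lemma length_quotient_map {f : N →ₗ[R] M} (hf : Function.Injective f) (A : Submodule R N) :
    Module.length R (M ⧸ A.map f) = Module.length R (N ⧸ A) + Module.length R (M ⧸ range f) := by
  have hle : A.map f ≤ range f := map_le_range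
  refine Module.length_eq_add_of_exact (A.mapQ (A.map f) f (A.le_comap_map f))
    (Submodule.factor hle) ?_ (Submodule.factor_surjective hle) ?_
  · rw [← ker_eq_bot, Submodule.ker_mapQ, Submodule.comap_map_eq_of_injective hf,
      Submodule.mkQ_map_self]
  · rw [exact_iff, Submodule.range_mapQ, Submodule.ker_mapQ, Submodule.comap_id]

lemma isFiniteLength_of_forall_isPrime_isMaximal [IsNoetherianRing R] [Module.Finite R M]
    (h : ∀ P : Ideal R, P.IsPrime → annihilator R M ≤ P → P.IsMaximal) : IsFiniteLength R M := by
  have : Ring.KrullDimLE 0 (R ⧸ annihilator R M) :=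
    (Ideal.krullDimLE_zero_quotient_iff_forall_minimalPrimes_isMaximal).mpr
      fun P hP ↦ h P hP.1.1 hP.1.2
  have : IsArtinianRing (R ⧸ annihilator R M) :=
    IsNoetherianRing.isArtinianRing_of_krullDimLE_zero
  let := Module.quotientAnnihilator (R := R) (M := M)
  have : IsScalarTower R (R ⧸ annihilator R M) M :=
    (isTorsionBySet_annihilator R M).isScalarTower
  have : Module.Finite (R ⧸ annihilator R M) M := .of_restrictScalars_finite R _ M
  exact isFiniteLength_iff_isNoetherian_isArtinian.mpr ⟨inferInstance,
    isArtinian_of_surjective_algebraMap (R := R ⧸ annihilator R M)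
      Ideal.Quotient.mk_surjective⟩

end Length

section Bidual

variable {R M N : Type*} [CommRing R] [AddCommGroup M] [Module R M] [AddCommGroup N] [Module R N]

lemma smul_mem_range_eval_of_comp_eq_smul_id [IsReflexive R N] {s : R} {σ : M →ₗ[R] N}
    {π : N →ₗ[R] M} (h : π ∘ₗ σ = s • LinearMap.id) (ξ : Dual R (Dual R M)) :
    s • ξ ∈ range (Dual.eval R M) := by
  obtain ⟨y, hy⟩ := (bijective_dual_eval R N).surjective (σ.dualMap.dualMap ξ)
  refine ⟨π y, ?_⟩
  calc Dual.eval R M (π y) = π.dualMap.dualMap (Dual.eval R N y) := rfl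
    _ = (π ∘ₗ σ).dualMap.dualMap ξ := by rw [hy]; rfl
    _ = s • ξ := by
      rw [h]
      ext g
      change ξ (g ∘ₗ (s • LinearMap.id)) = s • ξ g
      rw [comp_smul, comp_id, map_smul]

lemma injective_eval_of_injective [IsReflexive R N] {f : M →ₗ[R] N} (hf : Function.Injective f) :
    Function.Injective (Dual.eval R M) := by
  have h : Function.Injective (f.dualMap.dualMap ∘ Dual.eval R M) :=
    (bijective_dual_eval R N).injective.comp hf
  exact h.of_comp

lemma bijective_dualMap_of_bijective {f : M →ₗ[R] N} (hf : Function.Bijective f) :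
    Function.Bijective f.dualMap :=
  (LinearEquiv.ofBijective f hf).dualMap.bijective

lemma length_evalCoker_of_bijective_dualMap_dualMap {A : Submodule R M}
    (hM : Function.Injective (Dual.eval R M))
    (hA : Function.Bijective A.subtype.dualMap.dualMap) :
    Module.length R (evalCoker R A) =
      Module.length R (evalCoker R M) + Module.length R (M ⧸ A) := by
  let Φ := LinearEquiv.ofBijective _ hA
  have range_eval : (range (Dual.eval R A)).map Φ.toLinearMap = A.map (Dual.eval R M) := by
    calc (range (Dual.eval R A)).map Φ.toLinearMap
        = range (A.subtype.dualMap.dualMap ∘ₗ Dual.eval R A) := (range_comp _ _).symm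
      _ = range (Dual.eval R M ∘ₗ A.subtype) := rfl
      _ = A.map (Dual.eval R M) := by rw [range_comp, Submodule.range_subtype]
  rw [(Submodule.Quotient.equiv _ _ Φ range_eval).length_eq, length_quotient_map hM, add_comm]

end Bidual

section Free

variable {R M : Type*} [CommRing R] [AddCommGroup M] [Module R M]

lemma exists_comp_eq_smul_id_of_projective_localizedModule [FinitePresentation R M]
    (S : Submonoid R) [Projective (Localization S) (LocalizedModule S M)] :
    ∃ s ∈ S, ∃ (n : ℕ) (σ : M →ₗ[R] (Fin n → R)) (π : (Fin n → R) →ₗ[R] M),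
      π ∘ₗ σ = s • LinearMap.id := by
  obtain ⟨n, π, hπ⟩ := Module.Finite.exists_fin' R M
  obtain ⟨τ, hτ⟩ := Module.projective_lifting_property (LocalizedModule.map S π) LinearMap.id
    (LocalizedModule.map_surjective S π hπ)
  let ιM := LocalizedModule.mkLinearMap S M
  let ιF := LocalizedModule.mkLinearMap S (Fin n → R)
  obtain ⟨σ, s, hσ⟩ := FinitePresentation.exists_lift_of_isLocalizedModule S ιF
    (τ.restrictScalars R ∘ₗ ιM)
  have local_eq : ιM ∘ₗ (π ∘ₗ σ) = ιM ∘ₗ (s.1 • LinearMap.id) := by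
    ext x
    calc ιM (π (σ x)) = LocalizedModule.map S π (ιF (σ x)) :=
          (IsLocalizedModule.map_apply S ιF ιM π (σ x)).symm
      _ = LocalizedModule.map S π (s.1 • τ (ιM x)) := congrArg _ (LinearMap.congr_fun hσ x)
      _ = s.1 • ιM x := by
          rw [LinearMap.map_smul_of_tower]
          exact congrArg (s.1 • ·) (LinearMap.congr_fun hτ (ιM x))
      _ = ιM (s.1 • x) := (map_smul ιM s.1 x).symm
  obtain ⟨t, ht⟩ := Module.Finite.exists_smul_of_comp_eq_of_isLocalizedModule S ιM _ _ local_eq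
  refine ⟨t * s, (t * s).2, n, t.1 • σ, π, ?_⟩
  rw [comp_smul, mul_smul]
  exact ht

lemma injective_eval_of_isTorsionFree [IsDomain R] [IsNoetherianRing R] [Module.Finite R M]
    [IsTorsionFree R M] : Function.Injective (Dual.eval R M) := by
  have : FinitePresentation R M := finitePresentation_of_finite R M
  obtain ⟨s, hs, n, σ, π, h⟩ :=
    exists_comp_eq_smul_id_of_projective_localizedModule (M := M) (nonZeroDivisors R)
  refine injective_eval_of_injective (f := σ) fun x y hxy ↦ ?_
  refine smul_right_injective M (nonZeroDivisors.ne_zero hs) ?_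
  calc s • x = π (σ x) := (LinearMap.congr_fun h x).symm
    _ = π (σ y) := by rw [hxy]
    _ = s • y := LinearMap.congr_fun h y

end Free

section DualExtension

variable {R M : Type*} [CommRing R] [AddCommGroup M] [Module R M]

/-- The ideal `I` is nonzero and every element `b / a` of the fraction field that multiplies `I`
into `R` already lies in `R`. Over a Noetherian domain this says that `I` has grade at least two;
it is what allows `R`-valued functionals to be extended across a quotient annihilated by `I`. The
condition on `b / a` is written with denominators cleared. -/
def GradeAtLeastTwo (I : Ideal R) : Prop :=
  I ≠ ⊥ ∧ ∀ ⦃a b : R⦄, a ≠ 0 → (∀ c ∈ I, a ∣ b * c) → a ∣ b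

namespace GradeAtLeastTwo

variable {I J : Ideal R}

lemma mono (hI : GradeAtLeastTwo I) (hIJ : I ≤ J) : GradeAtLeastTwo J :=
  ⟨ne_bot_of_le_ne_bot hI.1 hIJ, fun _ _ ha h ↦ hI.2 ha fun c hc ↦ h c (hIJ hc)⟩

lemma top [Nontrivial R] : GradeAtLeastTwo (⊤ : Ideal R) :=
  ⟨top_ne_bot, fun _ b _ h ↦ mul_one b ▸ h 1 trivial⟩

lemma mul [NoZeroDivisors R] (hI : GradeAtLeastTwo I) (hJ : GradeAtLeastTwo J) :
    GradeAtLeastTwo (I * J) := by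
  refine ⟨mul_ne_zero hI.1 hJ.1, fun a b ha h ↦ hI.2 ha fun c hc ↦ hJ.2 ha fun d hd ↦ ?_⟩
  exact mul_assoc b c d ▸ h _ (Ideal.mul_mem_mul hc hd)

end GradeAtLeastTwo

lemma exists_eq_smul_of_forall_dvd [IsDomain R] {f : M →ₗ[R] R} {a : R} (ha : a ≠ 0)
    (h : ∀ x, a ∣ f x) : ∃ g : M →ₗ[R] R, f = a • g := by
  let e := LinearEquiv.toSpanNonzeroSingleton R R a ha
  have mem (x : M) : f x ∈ R ∙ a := Ideal.mem_span_singleton.mpr (h x)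
  refine ⟨e.symm ∘ₗ f.codRestrict (R ∙ a) mem, LinearMap.ext fun x ↦ ?_⟩
  have := congrArg Subtype.val (e.apply_symm_apply ⟨f x, mem x⟩)
  rw [LinearEquiv.toSpanNonzeroSingleton_apply] at this
  exact this.symm.trans (mul_comm _ _)

lemma GradeAtLeastTwo.bijective_dualMap_subtype [IsDomain R] {N : Submodule R M}
    (h : GradeAtLeastTwo (annihilator R (M ⧸ N))) : Function.Bijective N.subtype.dualMap := by
  obtain ⟨a, ha, ha0⟩ := Submodule.exists_mem_ne_zero_of_ne_bot h.1
  have smul_mem {c : R} (hc : c ∈ annihilator R (M ⧸ N)) (x : M) : c • x ∈ N := by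
    rw [← Submodule.Quotient.mk_eq_zero, Submodule.Quotient.mk_smul]
    exact mem_annihilator.mp hc _
  constructor
  · refine (injective_iff_map_eq_zero _).mpr fun g hg ↦ LinearMap.ext fun x ↦ ?_
    have : a * g x = 0 := by
      rw [← smul_eq_mul, ← map_smul]
      exact LinearMap.congr_fun hg ⟨a • x, smul_mem ha x⟩
    exact (mul_eq_zero.mp this).resolve_left ha0
  · intro g
    let ga : M →ₗ[R] R := g ∘ₗ (a • LinearMap.id).codRestrict N (smul_mem ha)
    obtain ⟨g', hg'⟩ := exists_eq_smul_of_forall_dvd (f := ga) ha0 fun x ↦ h.2 ha0 fun c hc ↦ by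
      refine ⟨g ⟨c • x, smul_mem hc x⟩, ?_⟩
      calc ga x * c = g (c • ⟨a • x, smul_mem ha x⟩) := by
            rw [map_smul, smul_eq_mul, mul_comm]; rfl
        _ = g (a • ⟨c • x, smul_mem hc x⟩) := congrArg g (Subtype.ext (smul_comm c a x))
        _ = a * g ⟨c • x, smul_mem hc x⟩ := map_smul g a _
    refine ⟨g', LinearMap.ext fun x ↦ mul_left_cancel₀ ha0 ?_⟩
    calc a * g' x = ga x := (LinearMap.congr_fun hg' x).symm
      _ = g (a • x) := rfl
      _ = a * g x := map_smul g a x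

lemma annihilator_mul_annihilator_quotient_le (N : Submodule R M) :
    annihilator R N * annihilator R (M ⧸ N) ≤ annihilator R M := by
  refine Ideal.mul_le.mpr fun a ha b hb ↦ mem_annihilator.mpr fun x ↦ ?_
  have hbx : b • x ∈ N := by
    rw [← Submodule.Quotient.mk_eq_zero, Submodule.Quotient.mk_smul]
    exact mem_annihilator.mp hb _
  rw [mul_smul]
  exact congrArg Subtype.val (mem_annihilator.mp ha ⟨b • x, hbx⟩)

lemma gradeAtLeastTwo_annihilator [IsDomain R]
    (hR : ∀ m : Ideal R, m.IsMaximal → GradeAtLeastTwo m) (h : IsFiniteLength R M) :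
    GradeAtLeastTwo (annihilator R M) := by
  induction h with
  | of_subsingleton =>
    rw [annihilator_eq_top_iff.mpr inferInstance]
    exact .top
  | @of_simple_quotient M _ _ N _ _ ih =>
    exact (ih.mul (hR _ IsSimpleModule.annihilator_isMaximal)).mono
      (annihilator_mul_annihilator_quotient_le N)

lemma dvd_of_forall_mem_exists_mem [IsDomain R] [IsIntegrallyClosed R] {I : Ideal R} (hfg : I.FG)
    (hI : I ≠ ⊥) {a b : R} (ha : a ≠ 0) (h : ∀ c ∈ I, ∃ d ∈ I, b * c = a * d) : a ∣ b := by
  let K := FractionRing R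
  let y : K := algebraMap R K b / algebraMap R K a
  have ha' : algebraMap R K a ≠ 0 := (IsFractionRing.to_map_eq_zero_iff (K := K)).not.mpr ha
  have hy : IsIntegral R y := by
    refine isIntegral_of_smul_mem_submodule (Submodule.map (Algebra.linearMap R K) I) ?_
      (Submodule.FG.map _ hfg) y ?_
    · rwa [Ne, ← Submodule.map_bot (Algebra.linearMap R K),
        (Submodule.map_injective_of_injective (IsFractionRing.injective R K)).eq_iff]
    · rintro _ ⟨c, hc, rfl⟩
      obtain ⟨d, hd, hcd⟩ := h c hc
      refine ⟨d, hd, ?_⟩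
      have hcd' := congrArg (algebraMap R K) hcd
      simp only [map_mul] at hcd'
      simp only [Algebra.linearMap_apply, smul_eq_mul, y]
      rw [div_mul_eq_mul_div, hcd', mul_div_cancel_left₀ _ ha']
  obtain ⟨q, hq⟩ := IsIntegrallyClosed.algebraMap_eq_of_integral hy
  refine ⟨q, IsFractionRing.injective R K ?_⟩
  rw [map_mul, hq, mul_div_cancel₀ _ ha']

lemma height_le_one_of_forall_dvd_mul [IsNoetherianRing R] {P : Ideal R} [P.IsPrime] {x u : R}
    (hx : x ∈ P) (hu : u ∉ P) (h : ∀ z ∈ P, x ∣ u * z) : P.height ≤ 1 := by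
  refine Ideal.height_le_one_of_isPrincipal_of_mem_minimalPrimes (Ideal.span {x}) P
    ⟨⟨inferInstance, (Ideal.span_singleton_le_iff_mem P).mpr hx⟩, fun Q hQ hQP z hz ↦ ?_⟩
  have : u * z ∈ Q := Ideal.mem_of_dvd Q (h z hz) (hQ.2 (Ideal.mem_span_singleton_self x))
  exact (hQ.1.mem_or_mem this).resolve_left fun huQ ↦ hu (hQP huQ)

lemma gradeAtLeastTwo_of_one_lt_height [IsDomain R] [IsNoetherianRing R]
    [IsIntegrallyClosed R] {P : Ideal R} [P.IsPrime] (hP : 1 < P.height) :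
    GradeAtLeastTwo P := by
  have hP0 : P ≠ ⊥ := by rintro rfl; simp at hP
  refine ⟨hP0, fun a b ha h ↦ ?_⟩
  -- For `y = b / a`: either `y P ⊆ P`, so `y` is integral, or `y x ∉ P` for some `x ∈ P`, and
  -- then `P` is minimal over `(x)`.
  choose! q hq using h
  by_cases hqP : ∀ c ∈ P, q c ∈ P
  · exact dvd_of_forall_mem_exists_mem (IsNoetherian.noetherian P) hP0 ha
      fun c hc ↦ ⟨q c, hqP c hc, hq c hc⟩
  · push Not at hqP
    obtain ⟨x, hx, hu⟩ := hqP
    refine absurd (height_le_one_of_forall_dvd_mul hx hu fun z hz ↦ ⟨q z, ?_⟩) hP.not_ge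
    exact mul_left_cancel₀ ha (by linear_combination x * hq z hz - z * hq x hx)

end DualExtension

section HeightOne

variable {R : Type*} [CommRing R]

lemma height_le_one_of_not_isMaximal (hR : ∀ m : Ideal R, m.IsMaximal → m.height ≤ 2)
    {P : Ideal R} [P.IsPrime] (hP : ¬ P.IsMaximal) : P.height ≤ 1 := by
  obtain ⟨m, hm, hPm⟩ := P.exists_le_maximal (Ideal.IsPrime.ne_top ‹_›)
  have hlt : P < m := hPm.lt_of_ne fun h ↦ hP (h ▸ hm)
  have : P.height + 1 ≤ 1 + 1 :=
    (Ideal.height_add_one_le_of_lt_of_isPrime hlt).trans <|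
      (hR m hm).trans_eq one_add_one_eq_two.symm
  exact (ENat.add_le_add_iff_right ENat.one_ne_top).mp this

variable [IsDomain R] [IsNoetherianRing R]

lemma isPrincipalIdealRing_localizationAtPrime [IsIntegrallyClosed R] (P : Ideal R) [P.IsPrime]
    (hP : P.height ≤ 1) : IsPrincipalIdealRing (Localization.AtPrime P) := by
  have : Ring.KrullDimLE 1 (Localization.AtPrime P) := by
    rw [Ring.krullDimLE_iff, IsLocalization.AtPrime.ringKrullDim_eq_height P]
    exact_mod_cast hP
  have : IsIntegrallyClosed (Localization.AtPrime P) :=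
    isIntegrallyClosed_of_isLocalization _ P.primeCompl P.primeCompl_le_nonZeroDivisors
  have dim_le_one (Q : Ideal (Localization.AtPrime P)) (hQ0 : Q ≠ ⊥) (hQ : Q.IsPrime) :
      Q = IsLocalRing.maximalIdeal _ :=
    IsLocalRing.eq_maximalIdeal (hQ.isMaximal_of_ne_bot hQ0)
  exact ((tfae_of_isNoetherianRing_of_isLocalRing_of_isDomain
    (Localization.AtPrime P)).out 3 0).mp (And.intro this dim_le_one)

variable {M : Type*} [AddCommGroup M] [Module R M] [Module.Finite R M] [IsTorsionFree R M]

lemma isFiniteLength_evalCoker_s4 [IsIntegrallyClosed R]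
    (hR : ∀ P : Ideal R, P.IsPrime → ¬ P.IsMaximal → P.height ≤ 1) :
    IsFiniteLength R (evalCoker R M) := by
  refine isFiniteLength_of_forall_isPrime_isMaximal fun P hP hann ↦ ?_
  by_contra hmax
  have := isPrincipalIdealRing_localizationAtPrime P (hR P hP hmax)
  have : Module.Free (Localization P.primeCompl) (LocalizedModule P.primeCompl M) :=
    Module.free_of_finite_type_torsion_free'
  have : FinitePresentation R M := finitePresentation_of_finite R M
  obtain ⟨s, hs, n, σ, π, h⟩ :=
    exists_comp_eq_smul_id_of_projective_localizedModule (M := M) P.primeCompl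
  refine hs (hann (mem_annihilator.mpr fun ξ ↦ ?_))
  obtain ⟨ξ, rfl⟩ := Submodule.Quotient.mk_surjective _ ξ
  exact (Submodule.Quotient.mk_eq_zero _).mpr (smul_mem_range_eval_of_comp_eq_smul_id h ξ)

end HeightOne

section Regular

variable {R : Type*} [CommRing R]

lemma eq_span_singleton_of_le_sup [IsNoetherianRing R] {P : Ideal R} [P.IsPrime] {p x : R}
    (hx : x ∈ (⊥ : Ideal R).jacobson) (hxP : x ∉ P) (hp : p ∈ P)
    (h : P ≤ Ideal.span {p} ⊔ Ideal.span {x}) : P = Ideal.span {p} := by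
  refine le_antisymm ?_ ((Ideal.span_singleton_le_iff_mem P).mpr hp)
  refine Submodule.le_of_le_smul_of_le_jacobson_bot (I := Ideal.span {x})
    (IsNoetherian.noetherian P) ((Ideal.span_singleton_le_iff_mem _).mpr hx) fun z hz ↦ ?_
  obtain ⟨_, hy, _, hw, rfl⟩ := Submodule.mem_sup.mp (h hz)
  obtain ⟨r, rfl⟩ := Ideal.mem_span_singleton'.mp hy
  obtain ⟨s, rfl⟩ := Ideal.mem_span_singleton.mp hw
  have hs : s ∈ P :=
    (‹P.IsPrime›.mem_or_mem ((P.add_mem_iff_right (P.mul_mem_left r hp)).mp hz)).resolve_left hxP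
  exact Submodule.add_mem_sup hy (Submodule.smul_mem_smul (Ideal.mem_span_singleton_self x) hs)

variable [IsNoetherianRing R] [IsLocalRing R] {a b : R}

lemma prime_of_span_pair_eq_maximalIdeal (hab : Ideal.span {a, b} = IsLocalRing.maximalIdeal R)
    (hR : 1 < (IsLocalRing.maximalIdeal R).height) : Prime a := by
  have not_minimal (c : R) : IsLocalRing.maximalIdeal R ∉ (Ideal.span {c}).minimalPrimes :=
    fun h ↦ hR.not_ge (Ideal.height_le_one_of_isPrincipal_of_mem_minimalPrimes _ _ h)
  have ha : a ≠ 0 := by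
    rintro rfl
    rw [Ideal.span_insert_zero] at hab
    refine not_minimal b ?_
    rw [hab, Ideal.minimalPrimes_eq_subsingleton_self]
    rfl
  obtain ⟨P, hPmin, hPm⟩ := Ideal.exists_minimalPrimes_le
    (show Ideal.span {a} ≤ IsLocalRing.maximalIdeal R from hab ▸ Ideal.span_mono (by simp))
  have : P.IsPrime := hPmin.1.1
  have haP : a ∈ P := hPmin.1.2 (Ideal.mem_span_singleton_self a)
  have hbP : b ∉ P := fun hb ↦ by
    have hmP : IsLocalRing.maximalIdeal R ≤ P := hab ▸ Ideal.span_le.mpr (Set.pair_subset haP hb)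
    exact not_minimal a (hmP.antisymm hPm ▸ hPmin)
  have hPa : P = Ideal.span {a} := by
    have hb : b ∈ IsLocalRing.maximalIdeal R := hab ▸ Ideal.mem_span_pair.mpr ⟨0, 1, by simp⟩
    refine eq_span_singleton_of_le_sup (IsLocalRing.maximalIdeal_le_jacobson _ hb) hbP haP ?_
    rwa [← Ideal.span_insert, hab]
  exact (Ideal.span_singleton_prime ha).mp (hPa ▸ this)

lemma isPrincipalIdealRing_quotient_span_singleton (ha : Prime a)
    (hab : Ideal.span {a, b} = IsLocalRing.maximalIdeal R) :
    IsPrincipalIdealRing (R ⧸ Ideal.span {a}) := by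
  have := (Ideal.span_singleton_prime ha.ne_zero).mpr ha
  have : IsLocalRing (R ⧸ Ideal.span {a}) :=
    .of_surjective' (Ideal.Quotient.mk _) Ideal.Quotient.mk_surjective
  have : (IsLocalRing.maximalIdeal (R ⧸ Ideal.span {a})).IsPrincipal := by
    refine ⟨Ideal.Quotient.mk _ b, ?_⟩
    rw [← IsLocalRing.map_maximalIdeal_of_surjective _ Ideal.Quotient.mk_surjective, ← hab,
      Ideal.map_span, Set.image_pair,
      Ideal.Quotient.eq_zero_iff_mem.mpr (Ideal.mem_span_singleton_self a), Ideal.span_insert_zero]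
  exact ((tfae_of_isNoetherianRing_of_isLocalRing_of_isDomain _).out 4 0).mp this

lemma uniqueFactorizationMonoid_of_span_pair_eq_maximalIdeal [IsDomain R]
    (hab : Ideal.span {a, b} = IsLocalRing.maximalIdeal R)
    (hR : 1 < (IsLocalRing.maximalIdeal R).height) : UniqueFactorizationMonoid R := by
  have ha : Prime a := prime_of_span_pair_eq_maximalIdeal hab hR
  have := isPrincipalIdealRing_quotient_span_singleton ha hab
  refine UniqueFactorizationMonoid.of_forall_isPrincipal_of_height_eq_one fun P _ hP ↦ ?_
  by_cases haP : a ∈ P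
  · exact ⟨a, P.eq_span_singleton_of_height_eq_one hP haP ha⟩
  let q := Ideal.Quotient.mk (Ideal.span {a})
  obtain ⟨p', hp'⟩ := IsPrincipalIdealRing.principal (P.map q)
  obtain ⟨p, hp, rfl⟩ : ∃ p ∈ P, q p = p' :=
    (Ideal.mem_map_iff_of_surjective q Ideal.Quotient.mk_surjective).mp
      (hp' ▸ Submodule.mem_span_singleton_self p')
  have ham : a ∈ IsLocalRing.maximalIdeal R := hab ▸ Ideal.mem_span_pair.mpr ⟨1, 0, by simp⟩
  refine ⟨p, eq_span_singleton_of_le_sup (IsLocalRing.maximalIdeal_le_jacobson _ ham) haP hp ?_⟩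
  calc P ≤ (P.map q).comap q := Ideal.le_comap_map
    _ = ((Ideal.span {p}).map q).comap q := by
      rw [hp', Ideal.map_span, Set.image_singleton]
    _ = Ideal.span {p} ⊔ Ideal.span {a} := by
      rw [Ideal.comap_map_of_surjective q Ideal.Quotient.mk_surjective, ← RingHom.ker,
        Ideal.mk_ker]

end Regular

theorem stmt_4_general {R : Type*} [CommRing R] [IsDomain R] [IsNoetherianRing R]
    [IsIntegrallyClosed R] (hR : ∀ m : Ideal R, m.IsMaximal → m.height = 2)
    {A' : Type*} [AddCommGroup A'] [Module R A'] [Module.Finite R A'] [IsTorsionFree R A']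
    (A : Submodule R A') (hfl : IsFiniteLength R (A' ⧸ A)) :
    Function.Bijective A.subtype.dualMap.dualMap ∧
    IsFiniteLength R (evalCoker R ↥A) ∧
    IsFiniteLength R (evalCoker R A') ∧
    ∃ a b c : ℕ,
      HasLength R (evalCoker R ↥A) a ∧
      HasLength R (evalCoker R A') b ∧
      HasLength R (A' ⧸ A) c ∧
      a = b + c := by
  have height_le_one (P : Ideal R) (hP : P.IsPrime) (hPmax : ¬ P.IsMaximal) : P.height ≤ 1 :=
    height_le_one_of_not_isMaximal (fun m hm ↦ (hR m hm).le) hPmax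
  have grade (m : Ideal R) (hm : m.IsMaximal) : GradeAtLeastTwo m :=
    gradeAtLeastTwo_of_one_lt_height (by simp [hR m hm])
  have bijective_bidual : Function.Bijective A.subtype.dualMap.dualMap :=
    bijective_dualMap_of_bijective (gradeAtLeastTwo_annihilator grade hfl).bijective_dualMap_subtype
  have hA : IsFiniteLength R (evalCoker R A) := isFiniteLength_evalCoker_s4 height_le_one
  have hA' : IsFiniteLength R (evalCoker R A') := isFiniteLength_evalCoker_s4 height_le_one
  obtain ⟨a, ha, ha_length⟩ := exists_hasLength_and_eq_length hA
  obtain ⟨b, hb, hb_length⟩ := exists_hasLength_and_eq_length hA'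
  obtain ⟨c, hc, hc_length⟩ := exists_hasLength_and_eq_length hfl
  refine ⟨bijective_bidual, hA, hA', a, b, c, ha, hb, hc, ?_⟩
  have length_add := length_evalCoker_of_bijective_dualMap_dualMap
    injective_eval_of_isTorsionFree bijective_bidual
  rw [← ha_length, ← hb_length, ← hc_length] at length_add
  exact_mod_cast length_add

theorem stmt_4 {R : Type*} [CommRing R] [IsDomain R] [IsNoetherianRing R] [IsLocalRing R]
    -- `R` is a regular local ring of Krull dimension 2
    (hdim : ringKrullDim R = 2)
    (hreg : ∃ a b : R, Ideal.span {a, b} = IsLocalRing.maximalIdeal R)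
    {A' : Type*} [AddCommGroup A'] [Module R A'] [Module.Finite R A']
    -- `A'` is torsion-free of rank 1
    (htfA' : Submodule.torsion R A' = ⊥)
    (hrkA' : Module.finrank (FractionRing R) (LocalizedModule (nonZeroDivisors R) A') = 1)
    -- `A ⊆ A'` is a (finitely generated, torsion-free) submodule of rank 1
    (A : Submodule R A') [Module.Finite R ↥A]
    (htfA : Submodule.torsion R ↥A = ⊥)
    (hrkA : Module.finrank (FractionRing R) (LocalizedModule (nonZeroDivisors R) ↥A) = 1)
    -- the quotient `A'/A` has finite length
    (hfl : IsFiniteLength R (A' ⧸ A)) :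
    -- the bidual of the inclusion `A → A'` is an isomorphism
    Function.Bijective A.subtype.dualMap.dualMap ∧
    -- `A^{∨∨}/A` and `A'^{∨∨}/A'` have finite length
    IsFiniteLength R (evalCoker R ↥A) ∧
    IsFiniteLength R (evalCoker R A') ∧
    -- `length(A^{∨∨}/A) = length(A'^{∨∨}/A') + length(A'/A)`
    ∃ a b c : ℕ,
      HasLength R (evalCoker R ↥A) a ∧
      HasLength R (evalCoker R A') b ∧
      HasLength R (A' ⧸ A) c ∧
      a = b + c := by
  obtain ⟨a, b, hab⟩ := hreg
  have height_eq : (IsLocalRing.maximalIdeal R).height = 2 :=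
    WithBot.coe_injective (IsLocalRing.maximalIdeal_height_eq_ringKrullDim.trans hdim)
  have : UniqueFactorizationMonoid R :=
    uniqueFactorizationMonoid_of_span_pair_eq_maximalIdeal hab (by simp [height_eq])
  have : IsTorsionFree R A' := Submodule.isTorsionFree_iff_torsion_eq_bot.mpr htfA'
  exact stmt_4_general (fun m hm ↦ IsLocalRing.eq_maximalIdeal hm ▸ height_eq) A hfl
end
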